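/- Let n ≥ 2 be an integer, ν > 0, 0 < κ ≤ ν/(2^{n+1} a_n), and suppose 0 < α < ( (π/(2^{n+1} a_n)) · n/(n+1) − 1/2^n ) · (1/√(2n−1)) · (2n/(2n−1))^{n−1}. Define L_1(A) := (−κ cos A)/(ν − κ 2^n a_n) · ( α a_n √(2n−1) ((2n−1)/n)^{n−1} + I_n(A) ) and L_2(A) := (κ cos A)/(ν + κ 2^n a_n) · ( α a_n √(2n−1) ((2n−1)/n)^{n−1} − I_n(A) ). Then: (i) ∫_{π/2}^{3π/2} L_1(A) dA ≤ α √(2n−1) ((2n−1)/(2n))^{n−1} + 1/2^{n−1}; and (ii) ∫_{−π/2}^{π/2} L_2(A) dA + ∫_{π/2}^{3π/2} L_1(A) dA < 0. -/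

import Mathlib

open Real Filter

/-- Normalizing constant `a_n = 2^n (n!)^2 / (2n)!`. -/
noncomputable def aW (n : ℕ) : ℝ :=
  2 ^ n * (Nat.factorial n : ℝ) ^ 2 / (Nat.factorial (2 * n) : ℝ)

/-- Influence function `I_n(θ) = a_n (1 + cos θ)^n`. -/
noncomputable def influence (n : ℕ) (θ : ℝ) : ℝ := aW n * (1 + Real.cos θ) ^ n

/-- Sensitivity function `S(θ) = -sin θ`. -/
noncomputable def sens (θ : ℝ) : ℝ := -Real.sin θ

/-!
Integrating the derivative of `sin * I_n` over a period gives `(n+1) ∫ cos * I_n = n ∫ I_n`. With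
the recursion `(2n+1) a_{n+1} = (n+1) a_n` this yields `∫ I_n = 2π` by induction, hence
`∫ cos * I_n = 2πn/(n+1)`. Let `M` be the integral of `-cos * I_n` over the half-period where
`cos ≤ 0`. Then `∫ L_1 = w (2c + M)` and `∫ L_2 = u (2c - 2πn/(n+1) - M)`, where
`c = α max |I_n'|`, `w = κ/(ν - κ 2^n a_n)` and `u = κ/(ν + κ 2^n a_n)`. The pointwise bound
`0 ≤ I_n ≤ a_n` on that half-period yields `0 ≤ M ≤ 2 a_n`, while the bound on `κ` yields
`w ≤ 1/(2^n a_n)` and `w ≤ 3u`. The bound on `α` says exactly `4c + 2 a_n < πn/(n+1)`, which makes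
`3u (2c + M) + u (2c - 2πn/(n+1) - M)` negative.
-/

open intervalIntegral

/-- The constant `c = α max |I_n'|` of `L_1` and `L_2`; the maximum of `|I_n'|` is attained where
`cos θ = (n - 1) / n`. -/
noncomputable def perturbation (n : ℕ) (α : ℝ) : ℝ :=
  α * aW n * √(2 * (n : ℝ) - 1) * ((2 * (n : ℝ) - 1) / (n : ℝ)) ^ (n - 1)

/-- The comparison function `L_1`, with an arbitrary constant `c` in place of `α max |I_n'|`. -/
noncomputable def comparisonL₁ (n : ℕ) (ν κ c A : ℝ) : ℝ :=
  (-κ * cos A) / (ν - κ * 2 ^ n * aW n) * (c + influence n A)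

/-- The comparison function `L_2`, with an arbitrary constant `c` in place of `α max |I_n'|`. -/
noncomputable def comparisonL₂ (n : ℕ) (ν κ c A : ℝ) : ℝ :=
  (κ * cos A) / (ν + κ * 2 ^ n * aW n) * (c - influence n A)

/-- The moment `M` of `I_n` against `-cos` over the half-period where `cos ≤ 0`, through which both
`∫ L_1` and `∫ L_2` are expressed. -/
noncomputable def backMoment (n : ℕ) : ℝ :=
  ∫ A in (π / 2)..(3 * π / 2), -cos A * influence n A

lemma aW_pos (n : ℕ) : 0 < aW n := by
  unfold aW
  positivity

lemma aW_zero : aW 0 = 1 := by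
  simp [aW]

lemma aW_succ (n : ℕ) : aW (n + 1) * (2 * n + 1) = aW n * (n + 1) := by
  have hfac : ((2 * n).factorial : ℝ) ≠ 0 := by positivity
  unfold aW
  rw [show 2 * (n + 1) = 2 * n + 1 + 1 by ring, Nat.factorial_succ (2 * n + 1),
    Nat.factorial_succ (2 * n), Nat.factorial_succ n]
  push_cast
  field_simp
  ring

@[fun_prop]
lemma continuous_influence (n : ℕ) : Continuous (influence n) := by
  unfold influence
  fun_prop

lemma influence_zero (θ : ℝ) : influence 0 θ = 1 := by
  simp [influence, aW_zero]

lemma influence_succ (n : ℕ) (θ : ℝ) :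
    (2 * n + 1) * influence (n + 1) θ = (n + 1) * (influence n θ + cos θ * influence n θ) := by
  unfold influence
  linear_combination (1 + cos θ) ^ (n + 1) * aW_succ n

lemma influence_nonneg (n : ℕ) (θ : ℝ) : 0 ≤ influence n θ :=
  mul_nonneg (aW_pos n).le (pow_nonneg (by linarith [neg_one_le_cos θ]) n)

lemma influence_le_aW (n : ℕ) {θ : ℝ} (hθ : cos θ ≤ 0) : influence n θ ≤ aW n :=
  mul_le_of_le_one_right (aW_pos n).le
    (pow_le_one₀ (by linarith [neg_one_le_cos θ]) (by linarith))

lemma hasDerivAt_sin_mul_influence (n : ℕ) (θ : ℝ) :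
    HasDerivAt (fun x ↦ sin x * influence n x)
      ((n + 1) * (cos θ * influence n θ) - n * influence n θ) θ := by
  have hderiv := (hasDerivAt_sin θ).mul
    ((((hasDerivAt_cos θ).const_add 1).fun_pow n).const_mul (aW n))
  refine hderiv.congr_deriv ?_
  unfold influence
  cases n with
  | zero => simp
  | succ m =>
    push_cast
    linear_combination -(aW (m + 1) * (m + 1) * (1 + cos θ) ^ m) * sin_sq θ

lemma succ_mul_integral_cos_mul_influence_period (n : ℕ) (t : ℝ) :
    (n + 1) * ∫ A in t..(t + 2 * π), cos A * influence n A
      = n * ∫ A in t..(t + 2 * π), influence n A := by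
  have hint : ∫ A in t..(t + 2 * π), ((n + 1) * (cos A * influence n A) - n * influence n A)
      = sin (t + 2 * π) * influence n (t + 2 * π) - sin t * influence n t :=
    integral_eq_sub_of_hasDerivAt (fun A _ ↦ hasDerivAt_sin_mul_influence n A)
      (Continuous.intervalIntegrable (by fun_prop) _ _)
  have hperiodic : influence n (t + 2 * π) = influence n t := by
    simp only [influence, cos_add_two_pi]
  rw [integral_sub (Continuous.intervalIntegrable (by fun_prop) _ _)
      (Continuous.intervalIntegrable (by fun_prop) _ _), integral_const_mul, integral_const_mul,
    sin_add_two_pi, hperiodic, sub_self] at hint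
  exact sub_eq_zero.mp hint

lemma integral_influence_period (n : ℕ) (t : ℝ) :
    ∫ A in t..(t + 2 * π), influence n A = 2 * π := by
  induction n with
  | zero => simp [influence_zero]
  | succ n ih =>
    have hsucc : (2 * n + 1) * ∫ A in t..(t + 2 * π), influence (n + 1) A
        = (n + 1) * ((∫ A in t..(t + 2 * π), influence n A)
          + ∫ A in t..(t + 2 * π), cos A * influence n A) := by
      rw [← integral_const_mul, ← integral_add (Continuous.intervalIntegrable (by fun_prop) _ _)
        (Continuous.intervalIntegrable (by fun_prop) _ _), ← integral_const_mul]
      simp only [influence_succ]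
    have hpos : (2 * n + 1 : ℝ) ≠ 0 := by positivity
    apply mul_left_cancel₀ hpos
    linear_combination hsucc + succ_mul_integral_cos_mul_influence_period n t + (2 * n + 1 : ℝ) * ih

lemma integral_cos_mul_influence_period (n : ℕ) (t : ℝ) :
    ∫ A in t..(t + 2 * π), cos A * influence n A = 2 * π * (n / (n + 1)) := by
  have hmoment := succ_mul_integral_cos_mul_influence_period n t
  rw [integral_influence_period] at hmoment
  field_simp
  linear_combination hmoment

lemma integral_cos_mul_const_front (c : ℝ) :
    ∫ A in (-(π / 2))..(π / 2), cos A * c = 2 * c := by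
  rw [integral_mul_const, integral_cos, sin_neg, sin_pi_div_two]
  norm_num

lemma integral_neg_cos_mul_const_back (c : ℝ) :
    ∫ A in (π / 2)..(3 * π / 2), -cos A * c = 2 * c := by
  rw [integral_mul_const, integral_neg, integral_cos, show 3 * π / 2 = π / 2 + π by ring,
    sin_add_pi, sin_pi_div_two]
  norm_num

lemma cos_nonpos_of_mem_back {θ : ℝ} (hθ : θ ∈ Set.Icc (π / 2) (3 * π / 2)) : cos θ ≤ 0 :=
  cos_nonpos_of_pi_div_two_le_of_le hθ.1 (by linarith [hθ.2])

lemma backMoment_nonneg (n : ℕ) : 0 ≤ backMoment n :=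
  integral_nonneg (by linarith [pi_pos]) fun _ hA ↦
    mul_nonneg (neg_nonneg.mpr (cos_nonpos_of_mem_back hA)) (influence_nonneg n _)

lemma backMoment_le (n : ℕ) : backMoment n ≤ 2 * aW n := by
  calc backMoment n ≤ ∫ A in (π / 2)..(3 * π / 2), -cos A * aW n :=
        integral_mono_on (by linarith [pi_pos]) (Continuous.intervalIntegrable (by fun_prop) _ _)
          (Continuous.intervalIntegrable (by fun_prop) _ _) fun A hA ↦
            have hcos := cos_nonpos_of_mem_back hA
            mul_le_mul_of_nonneg_left (influence_le_aW n hcos) (neg_nonneg.mpr hcos)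
    _ = 2 * aW n := integral_neg_cos_mul_const_back _

lemma integral_cos_mul_influence_front (n : ℕ) :
    ∫ A in (-(π / 2))..(π / 2), cos A * influence n A
      = 2 * π * (n / (n + 1)) + backMoment n := by
  have hback : backMoment n = -∫ A in (π / 2)..(3 * π / 2), cos A * influence n A := by
    simp only [backMoment, neg_mul, integral_neg]
  have hperiod := integral_cos_mul_influence_period n (-(π / 2))
  rw [show -(π / 2) + 2 * π = 3 * π / 2 by ring,
    ← integral_add_adjacent_intervals (b := π / 2)
      (Continuous.intervalIntegrable (by fun_prop) _ _)
      (Continuous.intervalIntegrable (by fun_prop) _ _)] at hperiod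
  linarith

lemma integral_comparisonL₁ (n : ℕ) (ν κ c : ℝ) :
    ∫ A in (π / 2)..(3 * π / 2), comparisonL₁ n ν κ c A
      = κ / (ν - κ * 2 ^ n * aW n) * (2 * c + backMoment n) := by
  rw [← integral_neg_cos_mul_const_back, backMoment,
    ← integral_add (Continuous.intervalIntegrable (by fun_prop) _ _)
      (Continuous.intervalIntegrable (by fun_prop) _ _), ← integral_const_mul]
  refine integral_congr fun A _ ↦ ?_
  simp only [comparisonL₁]
  ring

lemma integral_comparisonL₂ (n : ℕ) (ν κ c : ℝ) :
    ∫ A in (-(π / 2))..(π / 2), comparisonL₂ n ν κ c A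
      = κ / (ν + κ * 2 ^ n * aW n) * (2 * c - (2 * π * (n / (n + 1)) + backMoment n)) := by
  rw [← integral_cos_mul_const_front, ← integral_cos_mul_influence_front,
    ← integral_sub (Continuous.intervalIntegrable (by fun_prop) _ _)
      (Continuous.intervalIntegrable (by fun_prop) _ _), ← integral_const_mul]
  refine integral_congr fun A _ ↦ ?_
  simp only [comparisonL₂]
  ring

lemma div_sub_le_three_mul_div_add {κ ν p : ℝ} (hκ : 0 ≤ κ) (hp : 0 < p) (hpν : 2 * p ≤ ν) :
    κ / (ν - p) ≤ 3 * (κ / (ν + p)) := by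
  rw [← mul_div_assoc, div_le_div_iff₀ (by linarith) (by linarith)]
  nlinarith

section Comparison

variable {n : ℕ} {ν κ c : ℝ}

lemma integral_comparisonL₁_le (hκ0 : 0 < κ) (hκ : 2 * (κ * 2 ^ n * aW n) ≤ ν)
    (hc : -aW n ≤ c) :
    ∫ A in (π / 2)..(3 * π / 2), comparisonL₁ n ν κ c A ≤ 2 * (c + aW n) / (2 ^ n * aW n) := by
  have ha := aW_pos n
  have hp : 0 < κ * 2 ^ n * aW n := by positivity
  calc ∫ A in (π / 2)..(3 * π / 2), comparisonL₁ n ν κ c A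
      = κ / (ν - κ * 2 ^ n * aW n) * (2 * c + backMoment n) := integral_comparisonL₁ n ν κ c
    _ ≤ κ / (ν - κ * 2 ^ n * aW n) * (2 * (c + aW n)) :=
        mul_le_mul_of_nonneg_left (by linarith [backMoment_le n])
          (div_nonneg hκ0.le (by linarith))
    _ ≤ κ / (κ * 2 ^ n * aW n) * (2 * (c + aW n)) :=
        mul_le_mul_of_nonneg_right (div_le_div_of_nonneg_left hκ0.le hp (by linarith))
          (by linarith)
    _ = 2 * (c + aW n) / (2 ^ n * aW n) := by field_simp

lemma integral_comparisonL₂_add_integral_comparisonL₁_neg (hκ0 : 0 < κ)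
    (hκ : 2 * (κ * 2 ^ n * aW n) ≤ ν) (hc : 4 * c + 2 * aW n < π * (n / (n + 1))) :
    (∫ A in (-(π / 2))..(π / 2), comparisonL₂ n ν κ c A)
      + (∫ A in (π / 2)..(3 * π / 2), comparisonL₁ n ν κ c A) < 0 := by
  rw [integral_comparisonL₁, integral_comparisonL₂]
  have ha := aW_pos n
  have hp : 0 < κ * 2 ^ n * aW n := by positivity
  have hM0 := backMoment_nonneg n
  have hM := backMoment_le n
  have hm : 0 ≤ π * ((n : ℝ) / (n + 1)) := by positivity
  have hw : 0 ≤ κ / (ν - κ * 2 ^ n * aW n) := div_nonneg hκ0.le (by linarith)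
  have hu : 0 < κ / (ν + κ * 2 ^ n * aW n) := div_pos hκ0 (by linarith)
  have hwu := div_sub_le_three_mul_div_add hκ0.le hp hκ
  set w := κ / (ν - κ * 2 ^ n * aW n)
  set u := κ / (ν + κ * 2 ^ n * aW n)
  rcases le_total 0 (2 * c + backMoment n) with hsign | hsign
  · have hL₁ : w * (2 * c + backMoment n) ≤ 3 * u * (2 * c + backMoment n) :=
      mul_le_mul_of_nonneg_right hwu hsign
    have hsum : u * (8 * c + 2 * backMoment n - 2 * π * (n / (n + 1))) < 0 :=
      mul_neg_of_pos_of_neg hu (by linarith)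
    linarith
  · exact add_neg_of_neg_of_nonpos (mul_neg_of_pos_of_neg hu (by linarith))
      (mul_nonpos_of_nonneg_of_nonpos hw hsign)

end Comparison

lemma two_mul_mul_two_pow_mul_aW_le {n : ℕ} {ν κ : ℝ} (hκ : κ ≤ ν / (2 ^ (n + 1) * aW n)) :
    2 * (κ * 2 ^ n * aW n) ≤ ν := by
  have ha := aW_pos n
  rw [le_div_iff₀ (by positivity)] at hκ
  linear_combination hκ

lemma perturbation_nonneg {n : ℕ} {α : ℝ} (hn : 1 ≤ n) (hα : 0 ≤ α) : 0 ≤ perturbation n α := by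
  have hn' : (1 : ℝ) ≤ n := mod_cast hn
  have ha := aW_pos n
  have hodd : 0 ≤ 2 * (n : ℝ) - 1 := by linarith
  unfold perturbation
  positivity

lemma perturbation_eq (n : ℕ) (α : ℝ) :
    perturbation n α = 2 ^ (n - 1) * aW n *
      (α * √(2 * (n : ℝ) - 1) * ((2 * (n : ℝ) - 1) / (2 * (n : ℝ))) ^ (n - 1)) := by
  have hpow : ((2 * (n : ℝ) - 1) / n) ^ (n - 1)
      = 2 ^ (n - 1) * ((2 * (n : ℝ) - 1) / (2 * n)) ^ (n - 1) := by
    rw [← mul_pow, ← mul_div_assoc, mul_div_mul_left _ _ two_ne_zero]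
  rw [perturbation, hpow]
  ring

lemma two_mul_perturbation_add_aW_div {n : ℕ} (hn : 1 ≤ n) (α : ℝ) :
    2 * (perturbation n α + aW n) / (2 ^ n * aW n)
      = α * √(2 * (n : ℝ) - 1) * ((2 * (n : ℝ) - 1) / (2 * (n : ℝ))) ^ (n - 1)
        + 1 / 2 ^ (n - 1) := by
  have ha := (aW_pos n).ne'
  rw [perturbation_eq, ← mul_pow_sub_one (by lia : n ≠ 0) (2 : ℝ)]
  field_simp

lemma four_mul_perturbation_add_two_mul_aW_lt {n : ℕ} {α m : ℝ} (hn : 1 ≤ n)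
    (hα : α < (π / (2 ^ (n + 1) * aW n) * m - 1 / 2 ^ n) * (1 / √(2 * (n : ℝ) - 1))
      * (2 * (n : ℝ) / (2 * (n : ℝ) - 1)) ^ (n - 1)) :
    4 * perturbation n α + 2 * aW n < π * m := by
  have hn' : (1 : ℝ) ≤ n := mod_cast hn
  have ha := aW_pos n
  have hodd : 0 < 2 * (n : ℝ) - 1 := by linarith
  have hscaled : α * √(2 * (n : ℝ) - 1) * ((2 * (n : ℝ) - 1) / (2 * n)) ^ (n - 1)
      < π / (2 ^ (n + 1) * aW n) * m - 1 / 2 ^ n := by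
    rwa [mul_one_div, ← inv_div (2 * (n : ℝ) - 1), inv_pow, ← div_eq_mul_inv,
      lt_div_iff₀ (by positivity), lt_div_iff₀ (by positivity), mul_right_comm] at hα
  calc 4 * perturbation n α + 2 * aW n
      = 2 ^ (n + 1) * aW n
          * (α * √(2 * (n : ℝ) - 1) * ((2 * (n : ℝ) - 1) / (2 * n)) ^ (n - 1)) + 2 * aW n := by
        rw [perturbation_eq, pow_succ, ← mul_pow_sub_one (by lia : n ≠ 0) (2 : ℝ)]
        ring
    _ < 2 ^ (n + 1) * aW n * (π / (2 ^ (n + 1) * aW n) * m - 1 / 2 ^ n) + 2 * aW n := by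
        gcongr
    _ = π * m := by
        field_simp
        ring

/-- Integral estimates for the comparison functions `L_1` and `L_2`. -/
theorem stmt18 (n : ℕ) (hn : 2 ≤ n) (ν κ α : ℝ) (hν : 0 < ν)
    (hκ0 : 0 < κ) (hκ : κ ≤ ν / (2 ^ (n + 1) * aW n))
    (hα0 : 0 < α)
    (hα : α < (Real.pi / (2 ^ (n + 1) * aW n) * ((n : ℝ) / ((n : ℝ) + 1))
                - 1 / 2 ^ n)
              * (1 / Real.sqrt (2 * (n : ℝ) - 1))
              * (2 * (n : ℝ) / (2 * (n : ℝ) - 1)) ^ (n - 1)) :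
    (∫ A in (Real.pi / 2)..(3 * Real.pi / 2),
        (-κ * Real.cos A) / (ν - κ * 2 ^ n * aW n) *
          (α * aW n * Real.sqrt (2 * (n : ℝ) - 1) *
              ((2 * (n : ℝ) - 1) / (n : ℝ)) ^ (n - 1) + influence n A))
      ≤ α * Real.sqrt (2 * (n : ℝ) - 1) *
          ((2 * (n : ℝ) - 1) / (2 * (n : ℝ))) ^ (n - 1) + 1 / 2 ^ (n - 1) ∧
    (∫ A in (-(Real.pi / 2))..(Real.pi / 2),
        (κ * Real.cos A) / (ν + κ * 2 ^ n * aW n) *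
          (α * aW n * Real.sqrt (2 * (n : ℝ) - 1) *
              ((2 * (n : ℝ) - 1) / (n : ℝ)) ^ (n - 1) - influence n A)) +
    (∫ A in (Real.pi / 2)..(3 * Real.pi / 2),
        (-κ * Real.cos A) / (ν - κ * 2 ^ n * aW n) *
          (α * aW n * Real.sqrt (2 * (n : ℝ) - 1) *
              ((2 * (n : ℝ) - 1) / (n : ℝ)) ^ (n - 1) + influence n A))
      < 0 := by
  have hn1 : 1 ≤ n := by lia
  have hκν := two_mul_mul_two_pow_mul_aW_le hκ
  have hc : -aW n ≤ perturbation n α := by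
    linarith [aW_pos n, perturbation_nonneg hn1 hα0.le]
  exact ⟨(integral_comparisonL₁_le hκ0 hκν hc).trans_eq (two_mul_perturbation_add_aW_div hn1 α),
    integral_comparisonL₂_add_integral_comparisonL₁_neg hκ0 hκν
      (four_mul_perturbation_add_two_mul_aW_lt hn1 hα)⟩
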